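/- Let p be a prime number, let Ω/K be a field extension, and let L and M be intermediate fields of Ω/K such that: L/K is a finite separable extension of degree d with d < p, and M/K is a finite Galois extension whose Galois group is a p-group. Suppose there is no intermediate field E with K ⊆ E ⊆ L and [L : E] = 2. Then there is no intermediate field E' with M ⊆ E' ⊆ L⊔M (the compositum of L and M) and [L⊔M : E'] = 2. (This is the field-theoretic content of Lemma 6.4: if a generically finite map α : V → W of degree d is not composed with an involution, and W_p → W is a Galois cover whose Galois group is a p-group with p > d, then the base-changed map α_p : V ×_W W_p → W_p is not composed with an involution, where a map is 'composed with an involution' exactly when its function-field extension admits an intermediate field of index 2 from the top.) -/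

import Mathlib

/-!
If `[L ⊔ M : E'] = 2` with `M ≤ E'`, then `(L ⊔ M) / E'` is separable of degree two, hence Galois
with a nontrivial automorphism `σ`, whose fixed field is `E'`. The point is that `σ` preserves `L`:
since `d < p` is prime to `[M : K] = p ^ n`, the fields `L` and `M` are linearly disjoint, so
`[L ⊔ M : L] = p ^ n`. For `x ∈ L`, the element `σ x` has the same minimal polynomial over `K` as
`x`, so its degree over `L` is at most `d < p`; that degree also divides `p ^ n`, so it is `1` and
`σ x ∈ L` (`mem_of_natDegree_minpoly_lt`).

Thus `σ` acts on `L`, nontrivially because `σ` fixes `M` pointwise but not `L ⊔ M`, and the fixed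
field `L ⊓ E'` of this action has index two in `L` (`relfinrank_eq_two_of_involution`),
contradicting the hypothesis on `L`.
-/

open IntermediateField Module

/-- If `[F : L]` is a power of `p`, an element of `F` of degree less than `p` over `K` lies in `L`:
its degree over `L` is a power of `p` smaller than `p`. -/
lemma mem_of_natDegree_minpoly_lt {K Ω : Type*} [Field K] [Field Ω] [Algebra K Ω]
    {p n : ℕ} (hp : p.Prime) {L F : IntermediateField K Ω} (h : L ≤ F) [FiniteDimensional K F]
    (hn : relfinrank L F = p ^ n) {y : Ω} (hy : y ∈ F)
    (hdeg : (minpoly K y).natDegree < p) : y ∈ L := by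
  rw [relfinrank_eq_finrank_of_le h] at hn
  have : FiniteDimensional L (extendScalars h) :=
    FiniteDimensional.of_finrank_pos (by rw [hn]; exact pow_pos hp.pos n)
  have hyK : IsIntegral K y :=
    (Algebra.IsIntegral.isIntegral (R := K) (⟨y, hy⟩ : F)).map F.val
  have h1 : (minpoly L y).natDegree < p := by
    refine lt_of_le_of_lt ?_ hdeg
    rw [← Polynomial.natDegree_map (algebraMap K L) (p := minpoly K y)]
    exact Polynomial.natDegree_le_of_dvd (minpoly.dvd_map_of_isScalarTower K L y)
      (Polynomial.map_ne_zero (minpoly.ne_zero hyK))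
  have h2 : (minpoly L y).natDegree ∣ p ^ n := by
    have := minpoly.degree_dvd (K := L)
      (Algebra.IsIntegral.isIntegral (R := L) (⟨y, hy⟩ : extendScalars h))
    rw [hn] at this
    rwa [← minpoly.algebraMap_eq (B := extendScalars h) (B' := Ω)
      (algebraMap (extendScalars h) Ω).injective] at this
  have h3 : (minpoly L y).natDegree = 1 := by
    obtain ⟨k, -, hk⟩ := (Nat.dvd_prime_pow hp).1 h2
    rcases k with _ | k
    · simpa using hk
    · rw [hk] at h1
      exact absurd (Nat.le_self_pow (Nat.succ_ne_zero k) p) (not_le.2 h1)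
  obtain ⟨z, hz⟩ := minpoly.natDegree_eq_one_iff.1 h3
  rw [← hz]
  exact z.2

/-- If an involution `σ` of `F` preserves `L ≤ F` and has fixed field `E'` not containing `L`, then
`L ⊓ E'` has index two in `L`: for any `x ∈ L` moved by `σ`, the pair `1, x` spans `L` over
`L ⊓ E'`. -/
lemma relfinrank_eq_two_of_involution {K Ω : Type*} [Field K] [Field Ω] [Algebra K Ω]
    {L E' F : IntermediateField K Ω} [FiniteDimensional K L] (hLF : L ≤ F)
    (σ : F →+* F) (hσ : ∀ x, σ (σ x) = x) (hfix : ∀ x, σ x = x ↔ (x : Ω) ∈ E')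
    (hL : ∀ x : F, (x : Ω) ∈ L → (σ x : Ω) ∈ L) (hne : ¬ L ≤ E') :
    relfinrank (L ⊓ E') L = 2 := by
  have hE : L ⊓ E' ≤ L := inf_le_left
  have h1 : relfinrank (L ⊓ E') L ≠ 1 := by
    rw [Ne, relfinrank_eq_one_iff]
    exact fun h => hne (h.trans inf_le_right)
  have hmul := finrank_bot_mul_relfinrank hE
  have h0 : relfinrank (L ⊓ E') L ≠ 0 := by
    intro h
    rw [h, mul_zero] at hmul
    exact (finrank_pos (R := K) (M := L)).ne hmul
  suffices h2 : relfinrank (L ⊓ E') L ≤ 2 by omega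
  rw [relfinrank_eq_finrank_of_le hE]
  obtain ⟨x, hxL, hxE⟩ := SetLike.not_le_iff_exists.1 hne
  let xF : F := ⟨x, hLF hxL⟩
  have hx : xF - σ xF ≠ 0 := by
    intro h
    exact hxE ((hfix xF).1 (sub_eq_zero.1 h).symm)
  let v : Fin 2 → extendScalars hE := ![1, ⟨x, hxL⟩]
  have hspan : Submodule.span (L ⊓ E' : IntermediateField K Ω) (Set.range v) = ⊤ := by
    rw [eq_top_iff]
    rintro ⟨y, hyL⟩ -
    have hyL : y ∈ L := hyL
    let yF : F := ⟨y, hLF hyL⟩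
    -- Applying `σ` to `y = a + b * x` with `a`, `b` fixed determines `b`.
    let b : F := (yF - σ yF) / (xF - σ xF)
    let a : F := yF - b * xF
    have hb : σ b = b := by
      have hx' : σ xF - xF ≠ 0 := by rwa [← neg_sub, neg_ne_zero]
      simp only [b, map_div₀, map_sub, hσ]
      rw [← neg_sub (yF), ← neg_sub xF, neg_div_neg_eq]
    have ha : σ a = a := by
      have : b * (xF - σ xF) = yF - σ yF := div_mul_cancel₀ _ hx
      simp only [a, map_sub, map_mul, hb]
      linear_combination this
    have hbL : (b : Ω) ∈ L :=
      L.div_mem (L.sub_mem hyL (hL yF hyL)) (L.sub_mem hxL (hL xF hxL))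
    have haL : (a : Ω) ∈ L := L.sub_mem hyL (L.mul_mem hbL hxL)
    rw [Submodule.mem_span_range_iff_exists_fun]
    refine ⟨![⟨a, haL, (hfix a).1 ha⟩, ⟨b, hbL, (hfix b).1 hb⟩], ?_⟩
    apply Subtype.ext
    simp only [v, Fin.sum_univ_two, Algebra.smul_def]
    change (a : Ω) * 1 + b * x = y
    simp [a, yF, xF]
  simpa using (finrank_top (L ⊓ E' : IntermediateField K Ω) (extendScalars hE)).symm.trans_le
    (hspan ▸ finrank_range_le_card v)

/-- A separable extension of degree two has an involution whose fixed field is the base. -/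
lemma exists_involution_of_finrank_eq_two {E T : Type*} [Field E] [Field T] [Algebra E T]
    [Algebra.IsSeparable E T] (h : finrank E T = 2) :
    ∃ σ : T ≃ₐ[E] T, (∀ x, σ (σ x) = x) ∧
      ∀ x, σ x = x ↔ x ∈ Set.range (algebraMap E T) := by
  have : FiniteDimensional E T := FiniteDimensional.of_finrank_pos (by omega)
  have : Algebra.IsQuadraticExtension E T := ⟨h⟩
  have : IsGalois E T := ⟨⟩
  have hc : Nat.card (T ≃ₐ[E] T) = 2 := by rw [IsGalois.card_aut_eq_finrank, h]
  obtain ⟨σ, h1, huniv⟩ := (Nat.card_eq_two_iff' (1 : T ≃ₐ[E] T)).1 hc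
  refine ⟨σ, fun x => ?_, fun x => ?_⟩
  · have : σ ^ 2 = 1 := hc ▸ pow_card_eq_one'
    rw [pow_two] at this
    exact DFunLike.congr_fun this x
  · rw [IsGalois.mem_range_algebraMap_iff_fixed]
    refine ⟨fun hx f => ?_, fun hx => hx σ⟩
    by_cases hf : f = 1
    · rw [hf]; rfl
    · rw [huniv f hf]; exact hx

/-- **Lemma 6.4 (field-theoretic content).** Let `p` be a prime, `Ω/K` a field extension,
`L` and `M` intermediate fields such that `L/K` is finite separable of degree `d < p`, and
`M/K` is finite Galois with Galois group a `p`-group. If there is no intermediate field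
`E` with `K ⊆ E ⊆ L` and `[L : E] = 2`, then there is no intermediate field `E'` with
`M ⊆ E' ⊆ L ⊔ M` and `[L ⊔ M : E'] = 2`. -/
theorem not_composed_with_involution_of_base_change
    (p d : ℕ) (hp : p.Prime) (hdp : d < p)
    (K Ω : Type*) [Field K] [Field Ω] [Algebra K Ω]
    (L M : IntermediateField K Ω)
    [FiniteDimensional K L] [Algebra.IsSeparable K L]
    (hL : Module.finrank K L = d)
    [FiniteDimensional K M] [IsGalois K M]
    (hM : IsPGroup p (M ≃ₐ[K] M))
    (hnoinv : ¬ ∃ (E : IntermediateField K Ω) (hE : E ≤ L),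
      Module.finrank E (IntermediateField.extendScalars hE) = 2) :
    ¬ ∃ (E' : IntermediateField K Ω) (_ : M ≤ E') (hE' : E' ≤ L ⊔ M),
      Module.finrank E' (IntermediateField.extendScalars hE') = 2 := by
  rintro ⟨E', hME, hE', h2⟩
  have := Fact.mk hp
  have hd : 0 < d := hL ▸ finrank_pos
  obtain ⟨n, hn⟩ := IsPGroup.iff_card.1 hM
  rw [IsGalois.card_aut_eq_finrank] at hn
  have hLD : L.LinearDisjoint M := LinearDisjoint.of_finrank_coprime (by
    rw [hL, hn]
    exact (Nat.coprime_of_lt_prime hd.ne' hdp hp).symm.pow_right n)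
  have hrel : relfinrank L (L ⊔ M) = p ^ n := by
    have h := finrank_bot_mul_relfinrank (le_sup_left : L ≤ L ⊔ M)
    rw [hLD.finrank_sup, hL, hn] at h
    exact Nat.eq_of_mul_eq_mul_left hd h
  have : Algebra.IsSeparable K (extendScalars hE') :=
    inferInstanceAs (Algebra.IsSeparable K (L ⊔ M : IntermediateField K Ω))
  have : Algebra.IsSeparable E' (extendScalars hE') :=
    Algebra.isSeparable_tower_top_of_isSeparable K E' _
  have : IsScalarTower K (extendScalars hE') Ω := IsScalarTower.of_algebraMap_eq fun _ => rfl
  obtain ⟨σ, hσ, hfix⟩ := exists_involution_of_finrank_eq_two h2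
  have hfix' : ∀ x : extendScalars hE', σ x = x ↔ (x : Ω) ∈ E' := by
    intro x
    rw [hfix]
    constructor
    · rintro ⟨z, rfl⟩
      exact z.2
    · exact fun hx => ⟨⟨x, hx⟩, rfl⟩
  have hσL : ∀ x : extendScalars hE', (x : Ω) ∈ L → (σ x : Ω) ∈ L := by
    intro x hx
    refine mem_of_natDegree_minpoly_lt hp le_sup_left hrel (σ x).2 ?_
    have e1 : minpoly K (σ x : Ω) = minpoly K (⟨x, hx⟩ : L) := by
      have e2 : minpoly K (σ x) = minpoly K x := minpoly.algEquiv_eq (σ.restrictScalars K) x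
      have e3 : minpoly K (σ x : Ω) = minpoly K (σ x) :=
        minpoly.algebraMap_eq (algebraMap (extendScalars hE') Ω).injective _
      have e4 : minpoly K (x : Ω) = minpoly K x :=
        minpoly.algebraMap_eq (algebraMap (extendScalars hE') Ω).injective _
      have e5 : minpoly K (x : Ω) = minpoly K (⟨x, hx⟩ : L) :=
        minpoly.algebraMap_eq (algebraMap L Ω).injective (⟨x, hx⟩ : L)
      rw [e3, e2, ← e4, e5]
    rw [e1]
    exact (minpoly.natDegree_le _).trans_lt (hL ▸ hdp)
  have hne : ¬ L ≤ E' := by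
    intro h
    have h1 := relfinrank_eq_one_of_le (sup_le h hME)
    rw [relfinrank_eq_finrank_of_le hE', h2] at h1
    omega
  refine hnoinv ⟨L ⊓ E', inf_le_left, ?_⟩
  rw [← relfinrank_eq_finrank_of_le]
  exact relfinrank_eq_two_of_involution (F := L ⊔ M) le_sup_left
    (σ : extendScalars hE' →+* extendScalars hE') hσ hfix' hσL hne
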